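/- arXiv:1301.4963 — 2 statements merged into one kernel-verified Lean document; each statement's English description precedes it below -/
import Mathlib

section
/- Let m ≥ 1 be an integer. For s ≥ 0 let k(s) = ⌊√(s + 1/4) + 1/2⌋ and p(s) = k(s) mod m, and define N_N(s) = k(s)²/(2m) + k(s)/2 + p(s)(m − p(s))/(2m) and N_D(s) = k(s)²/(2m) − k(s)/2 + p(s)(m − p(s))/(2m). Define Ñ_±(t) = t/(2m) ± (1/2)√(t + 1/4) + (1/12)(m − 1/m) + 1/(6m) and A_N(t) = (1/t)∫₀ᵗ (N_N(s) − Ñ_+(s)) ds, A_D(t) = (1/t)∫₀ᵗ (N_D(s) − Ñ_−(s)) ds. Then there exists a continuous periodic function g of mean value zero and a constant C such that |A_N(t) − g(√(t + 1/4))| ≤ C t^{−1/2} and |A_D(t) − g(√(t + 1/4))| ≤ C t^{−1/2} for all t ≥ 1. -/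
open Real

/-- The squared distance to the nearest integer, reflected and shifted to have mean zero. -/
noncomputable def luneProfile (x : ℝ) : ℝ := 1 / 12 - ‖(x : UnitAddCircle)‖ ^ 2

lemma continuous_luneProfile : Continuous luneProfile :=
  continuous_const.sub ((continuous_norm.comp (AddCircle.continuous_mk' 1)).pow 2)

lemma luneProfile_add_one (x : ℝ) : luneProfile (x + 1) = luneProfile x := by
  simp [luneProfile]

lemma luneProfile_natCast_add (K : ℕ) {d : ℝ} (hd : |d| ≤ 1 / 2) :
    luneProfile (K + d) = 1 / 12 - d ^ 2 := by
  have h : ((K + d : ℝ) : UnitAddCircle) = (d : UnitAddCircle) := by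
    rw [AddCircle.coe_add, add_eq_right, AddCircle.coe_eq_zero_iff]
    exact ⟨K, by simp⟩
  have h2 : ‖(d : UnitAddCircle)‖ = |d| :=
    (AddCircle.norm_coe_eq_abs_iff 1 one_ne_zero).2 (by simpa using hd)
  rw [luneProfile, h, h2, sq_abs]

lemma integral_luneProfile : ∫ x in (0 : ℝ)..1, luneProfile x = 0 := by
  have hp : Function.Periodic luneProfile 1 := luneProfile_add_one
  have h := hp.intervalIntegral_add_eq 0 (-(1 / 2))
  rw [zero_add] at h
  rw [h]
  have h2 : ∫ x in (-(1 / 2) : ℝ)..(-(1 / 2) + 1), luneProfile x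
      = ∫ x in (-(1 / 2) : ℝ)..(-(1 / 2) + 1), (1 / 12 - x ^ 2) := by
    refine intervalIntegral.integral_congr fun x hx => ?_
    rw [Set.uIcc_of_le (by norm_num)] at hx
    have := luneProfile_natCast_add 0 (d := x) (abs_le.2 ⟨by linarith [hx.1], by linarith [hx.2]⟩)
    simpa using this
  rw [h2, intervalIntegral.integral_sub (by simp) (by simp), integral_pow]
  norm_num

/-- On an interval where the counting function is constant, the error is explicitly integrable. -/
lemma integral_const_sub_sqrt (v a e b t : ℝ) (hb : 0 ≤ b) (hbt : b ≤ t) :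
    IntervalIntegrable (fun s => v - (a / 2 * s + e / 2 * √(s + 1 / 4))) MeasureTheory.volume b t ∧
    ∫ s in b..t, (v - (a / 2 * s + e / 2 * √(s + 1 / 4))) =
      v * (t - b) - a / 4 * (t ^ 2 - b ^ 2) - e / 3 * (√(t + 1 / 4) ^ 3 - √(b + 1 / 4) ^ 3) := by
  have hi : IntervalIntegrable (fun s => v - (a / 2 * s + e / 2 * √(s + 1 / 4)))
      MeasureTheory.volume b t := by
    apply Continuous.intervalIntegrable
    fun_prop
  refine ⟨hi, ?_⟩
  rw [intervalIntegral.integral_eq_sub_of_hasDerivAt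
    (f := fun s => v * s - a / 4 * s ^ 2 - e / 3 * √(s + 1 / 4) ^ 3) _ hi]
  · ring
  · intro x hx
    rw [Set.uIcc_of_le hbt] at hx
    have hpos : 0 < x + 1 / 4 := by linarith [hx.1]
    have hs : HasDerivAt (fun s : ℝ => √(s + 1 / 4)) (1 / (2 * √(x + 1 / 4))) x :=
      ((hasDerivAt_id x).add_const (1 / 4)).sqrt hpos.ne'
    have h := (((hasDerivAt_id x).const_mul v).sub ((hasDerivAt_pow 2 x).const_mul (a / 4))).sub
      ((hs.pow 3).const_mul (e / 3))
    refine h.congr_deriv ?_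
    have hne : √(x + 1 / 4) ≠ 0 := (sqrt_pos.2 hpos).ne'
    have h3 : (√(x + 1 / 4)) ^ (3 - 1) * (1 / (2 * √(x + 1 / 4))) = √(x + 1 / 4) / 2 := by
      rw [show 3 - 1 = 2 from rfl]
      generalize √(x + 1 / 4) = y at hne
      field_simp
    push_cast
    rw [mul_assoc 3, h3]
    ring

/-- Bounds for the lower-order polynomials that appear in the error inside a single interval. -/
lemma abs_block_polynomials_le {K d : ℝ} (hK : 1 ≤ K) (hd : |d| ≤ 1 / 2) :
    |K * (d * (d ^ 2 - 1 / 4) - 1 / 6) + 3 / 4 * (d ^ 2 - 1 / 4) ^ 2| ≤ K ∧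
    |-(K * (d ^ 2 - 1 / 4) / 2) - (d ^ 3 + 1 / 8) / 3| ≤ K ∧
    |(2 * d + 1) * K + (d ^ 2 - 1 / 4)| ≤ 3 * K := by
  obtain ⟨hdl, hdr⟩ := abs_le.1 hd
  have hdd : d ^ 2 ≤ 1 / 4 := by nlinarith
  have hd0 : 0 ≤ d ^ 2 := sq_nonneg d
  have hw : |d ^ 2 - 1 / 4| ≤ 1 / 4 := abs_le.2 ⟨by linarith, by linarith⟩
  have hc : |d * (d ^ 2 - 1 / 4)| ≤ 1 / 2 * (1 / 4) := by
    rw [abs_mul]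
    gcongr
  have hq : (d ^ 2 - 1 / 4) ^ 2 ≤ (1 / 4) ^ 2 := sq_le_sq' (by linarith) (by linarith)
  have hq0 : 0 ≤ (d ^ 2 - 1 / 4) ^ 2 := sq_nonneg _
  obtain ⟨hcl, hcr⟩ := abs_le.1 hc
  have h1 : |K * (d * (d ^ 2 - 1 / 4) - 1 / 6)| ≤ K * (1 / 2) := by
    rw [abs_mul, abs_of_nonneg (by linarith)]
    gcongr
    exact abs_le.2 ⟨by linarith, by linarith⟩
  have h2 : |K * (d ^ 2 - 1 / 4)| ≤ K * (1 / 4) := by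
    rw [abs_mul, abs_of_nonneg (by linarith)]
    gcongr
  have h3 : |(2 * d + 1) * K| ≤ 2 * K := by
    rw [abs_mul, abs_of_nonneg (show 0 ≤ K by linarith)]
    gcongr
    exact abs_le.2 ⟨by linarith, by linarith⟩
  have h4 : d ^ 3 = d * (d ^ 2 - 1 / 4) + d / 4 := by ring
  obtain ⟨h1l, h1r⟩ := abs_le.1 h1
  obtain ⟨h2l, h2r⟩ := abs_le.1 h2
  obtain ⟨h3l, h3r⟩ := abs_le.1 h3
  refine ⟨abs_le.2 ⟨by linarith, by linarith⟩, abs_le.2 ⟨by linarith, by linarith⟩,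
    abs_le.2 ⟨by linarith, by linarith⟩⟩

/-- The error inside the `K`-th interval, given the error `J` accumulated before it. -/
lemma abs_block_error_le {a e M u R K d t J : ℝ} (ha0 : 0 ≤ a) (ha1 : a ≤ 1) (he : |e| ≤ 1)
    (hR : |R| ≤ M) (hu : |u| ≤ M) (hK : 1 ≤ K) (hd : |d| ≤ 1 / 2)
    (ht : t = (K + d) ^ 2 - 1 / 4) (hJ : |J + a * K ^ 2 / 6 - 2 * K * R| ≤ (1 + 2 * M) * K) :
    |J + ((a / 2 * K ^ 2 + e / 2 * K + u - a / 6) * (t - (K ^ 2 - K))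
        - a / 4 * (t ^ 2 - (K ^ 2 - K) ^ 2)
        - e / 3 * ((K + d) ^ 3 - (K - 1 / 2) ^ 3)) - t * (a * (1 / 12 - d ^ 2))|
      ≤ (3 + 7 * M) * K := by
  have hM : 0 ≤ M := (abs_nonneg R).trans hR
  have hK0 : 0 ≤ K := by linarith
  obtain ⟨b₁, b₂, b₃⟩ := abs_block_polynomials_le hK hd
  have key : J + ((a / 2 * K ^ 2 + e / 2 * K + u - a / 6) * (t - (K ^ 2 - K))
        - a / 4 * (t ^ 2 - (K ^ 2 - K) ^ 2)
        - e / 3 * ((K + d) ^ 3 - (K - 1 / 2) ^ 3)) - t * (a * (1 / 12 - d ^ 2))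
      = (J + a * K ^ 2 / 6 - 2 * K * R) + 2 * K * R + u * ((2 * d + 1) * K + (d ^ 2 - 1 / 4))
        + a * (K * (d * (d ^ 2 - 1 / 4) - 1 / 6) + 3 / 4 * (d ^ 2 - 1 / 4) ^ 2)
        + e * (-(K * (d ^ 2 - 1 / 4) / 2) - (d ^ 3 + 1 / 8) / 3) := by
    rw [ht]
    ring
  rw [key]
  have t₁ : |2 * K * R| ≤ 2 * K * M := by
    rw [abs_mul, abs_of_nonneg (by positivity)]
    gcongr
  have t₂ := (abs_mul u _).trans_le (mul_le_mul hu b₃ (abs_nonneg _) hM)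
  have t₃ := (abs_mul a _).trans_le
    (mul_le_mul ((abs_of_nonneg ha0).trans_le ha1) b₁ (abs_nonneg _) zero_le_one)
  have t₄ := (abs_mul e _).trans_le (mul_le_mul he b₂ (abs_nonneg _) zero_le_one)
  calc _ ≤ (1 + 2 * M) * K + 2 * K * M + M * (3 * K) + 1 * K + 1 * K :=
        (abs_add_le _ _).trans (add_le_add ((abs_add_le _ _).trans (add_le_add
          ((abs_add_le _ _).trans (add_le_add
            ((abs_add_le _ _).trans (add_le_add hJ t₁)) t₂)) t₃)) t₄)
    _ = (3 + 7 * M) * K := by ring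

lemma abs_integral_sub_luneProfile_le {a e M : ℝ} (ha0 : 0 ≤ a) (ha1 : a ≤ 1) (he : |e| ≤ 1)
    {u R : ℕ → ℝ} (hR : ∀ k, R (k + 1) = R k + u k)
    (hRM : ∀ k, |R k| ≤ M) (huM : ∀ k, |u k| ≤ M) {f : ℝ → ℝ}
    (hf : ∀ K : ℕ, ∀ s : ℝ, (K : ℝ) ^ 2 - K ≤ s → s < (K : ℝ) ^ 2 + K →
      f s = (a / 2 * K ^ 2 + e / 2 * K + u K - a / 6) - (a / 2 * s + e / 2 * √(s + 1 / 4)))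
    {t : ℝ} (ht : 1 ≤ t) :
    |(∫ s in (0 : ℝ)..t, f s) - t * (a * luneProfile √(t + 1 / 4))| ≤ (3 + 7 * M) * (2 * √t) := by
  have hKK : ∀ K : ℕ, (0 : ℝ) ≤ (K : ℝ) ^ 2 - K := by
    intro K
    have : (K : ℝ) ≤ (K : ℝ) ^ 2 := by exact_mod_cast Nat.le_self_pow two_ne_zero K
    linarith
  have hblock : ∀ K : ℕ, ∀ r : ℝ, (K : ℝ) ^ 2 - K ≤ r → r ≤ (K : ℝ) ^ 2 + K →
      IntervalIntegrable f MeasureTheory.volume ((K : ℝ) ^ 2 - K) r ∧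
      ∫ s in ((K : ℝ) ^ 2 - K)..r, f s =
        (a / 2 * K ^ 2 + e / 2 * K + u K - a / 6) * (r - ((K : ℝ) ^ 2 - K))
        - a / 4 * (r ^ 2 - ((K : ℝ) ^ 2 - K) ^ 2)
        - e / 3 * (√(r + 1 / 4) ^ 3 - √((K : ℝ) ^ 2 - K + 1 / 4) ^ 3) := by
    intro K r h1 h2
    obtain ⟨hi, hv⟩ := integral_const_sub_sqrt (a / 2 * K ^ 2 + e / 2 * K + u K - a / 6) a e _ r
      (hKK K) h1
    have hE : Set.EqOn f (fun s => (a / 2 * K ^ 2 + e / 2 * K + u K - a / 6)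
        - (a / 2 * s + e / 2 * √(s + 1 / 4))) (Set.uIoo ((K : ℝ) ^ 2 - K) r) := by
      intro s hs
      rw [Set.uIoo_of_le h1] at hs
      exact hf K s hs.1.le (hs.2.trans_le h2)
    exact ⟨hi.congr_uIoo hE.symm, by rw [intervalIntegral.integral_congr_uIoo hE, hv]⟩
  have hM : 0 ≤ M := (abs_nonneg _).trans (hRM 0)
  have hmain : ∀ K : ℕ, IntervalIntegrable f MeasureTheory.volume 0 ((K : ℝ) ^ 2 - K) ∧
      |(∫ s in (0 : ℝ)..((K : ℝ) ^ 2 - K), f s) + a * K ^ 2 / 6 - 2 * K * R K|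
        ≤ (1 + 2 * M) * K := by
    intro K
    induction K with
    | zero => simp
    | succ K ih =>
      obtain ⟨hi, hb⟩ := ih
      have hK0 : (0 : ℝ) ≤ K := K.cast_nonneg
      have hend : ((K + 1 : ℕ) : ℝ) ^ 2 - (K + 1 : ℕ) = (K : ℝ) ^ 2 + K := by push_cast; ring
      obtain ⟨hi2, hv⟩ := hblock K ((K : ℝ) ^ 2 + K) (by linarith) le_rfl
      rw [hend]
      refine ⟨hi.trans hi2, ?_⟩
      rw [← intervalIntegral.integral_add_adjacent_intervals hi hi2, hv]
      have hR1 := abs_le.1 (hRM (K + 1))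
      have he' := abs_le.1 he
      rcases K.eq_zero_or_pos with rfl | h
      · norm_num
        exact abs_le.2 ⟨by linarith, by linarith⟩
      · have h1 : (1 : ℝ) ≤ K := by exact_mod_cast h
        rw [show (K : ℝ) ^ 2 + K + 1 / 4 = (K + 1 / 2) ^ 2 by ring,
          show (K : ℝ) ^ 2 - K + 1 / 4 = (K - 1 / 2) ^ 2 by ring, sqrt_sq (by linarith),
          sqrt_sq (by linarith)]
        have hstep : |a / 6 - e / 12 - 2 * R (K + 1)| ≤ 1 + 2 * M :=
          abs_le.2 ⟨by linarith, by linarith⟩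
        have hu : u K = R (K + 1) - R K := by rw [hR]; ring
        have hb' := (abs_add_le _ _).trans (add_le_add hb hstep)
        rw [hu]
        push_cast
        refine (le_of_eq ?_).trans (hb'.trans (le_of_eq ?_))
        · congr 1
          ring
        · ring
  obtain ⟨K, hK1, hl, hr⟩ : ∃ K : ℕ, (1 : ℝ) ≤ K ∧ (K : ℝ) - 1 / 2 ≤ √(t + 1 / 4) ∧
      √(t + 1 / 4) < K + 1 / 2 := by
    have h1 : (1 : ℝ) ≤ √(t + 1 / 4) := one_le_sqrt.2 (by linarith)
    refine ⟨⌊√(t + 1 / 4) + 1 / 2⌋₊, ?_, ?_, ?_⟩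
    · exact_mod_cast Nat.le_floor (by push_cast; linarith)
    · linarith [Nat.floor_le (show 0 ≤ √(t + 1 / 4) + 1 / 2 by positivity)]
    · linarith [Nat.lt_floor_add_one (√(t + 1 / 4) + 1 / 2)]
  obtain ⟨d, hd⟩ : ∃ d, √(t + 1 / 4) = K + d := ⟨√(t + 1 / 4) - K, by ring⟩
  have hd2 : |d| ≤ 1 / 2 := abs_le.2 ⟨by linarith, by linarith⟩
  have htd : t = (K + d) ^ 2 - 1 / 4 := by
    rw [← hd, sq_sqrt (by linarith)]; ring
  have hle : (K : ℝ) ^ 2 - K ≤ t := by nlinarith [abs_le.1 hd2]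
  have hre : t ≤ (K : ℝ) ^ 2 + K := by nlinarith [abs_le.1 hd2]
  obtain ⟨hi, hb⟩ := hmain K
  obtain ⟨hi2, hv⟩ := hblock K t hle hre
  have hKt : (K : ℝ) ≤ 2 * √t := by
    have h2 : (K : ℝ) - 1 ≤ √t := le_sqrt_of_sq_le (by nlinarith)
    have h1 : 1 ≤ √t := one_le_sqrt.2 ht
    linarith
  refine le_trans ?_ (mul_le_mul_of_nonneg_left hKt (by positivity))
  have s2 : √((K : ℝ) ^ 2 - K + 1 / 4) = K - 1 / 2 := by
    rw [show (K : ℝ) ^ 2 - K + 1 / 4 = (K - 1 / 2) ^ 2 by ring, sqrt_sq (by linarith)]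
  rw [← intervalIntegral.integral_add_adjacent_intervals hi hi2, hv, hd, s2,
    luneProfile_natCast_add K hd2]
  exact abs_block_error_le ha0 ha1 he (hRM K) (huM K) hK1 hd2 htd hb

/-- Partial sums of the deviation of `p (m - p) / (2 m)` from its mean over a period. -/
noncomputable def lunePartialSum (m p : ℝ) : ℝ :=
  (m * p * (p - 1) / 2 - (p - 1) * p * (2 * p - 1) / 6) / (2 * m) - p * (m - 1 / m) / 12

lemma lunePartialSum_mod_succ (m : ℕ) (hm : 1 ≤ m) (k : ℕ) :
    lunePartialSum m ((k + 1) % m : ℕ) = lunePartialSum m (k % m : ℕ) +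
      (((k % m : ℕ) : ℝ) * (m - (k % m : ℕ)) / (2 * m) - 1 / 12 * ((m : ℝ) - 1 / m)) := by
  have hm0 : (m : ℝ) ≠ 0 := by positivity
  have hlt : k % m < m := Nat.mod_lt k hm
  rcases Nat.lt_or_ge (k % m + 1) m with h | h
  · have : (k + 1) % m = k % m + 1 := by
      rw [← Nat.mod_add_mod, Nat.mod_eq_of_lt h]
    rw [this]
    push_cast
    simp only [lunePartialSum]
    field_simp
    ring
  · have h1 : k % m + 1 = m := by omega
    have : (k + 1) % m = 0 := by
      rw [← Nat.mod_add_mod, h1, Nat.mod_self]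
    have h2 : ((k % m : ℕ) : ℝ) = m - 1 := by
      rw [eq_sub_iff_add_eq]; exact_mod_cast h1
    rw [this, h2]
    simp only [lunePartialSum]
    field_simp
    push_cast
    ring

lemma exists_bound_comp_mod (F : ℕ → ℝ) (m : ℕ) (hm : 1 ≤ m) : ∃ M, ∀ k, |F (k % m)| ≤ M :=
  ⟨∑ j ∈ Finset.range m, |F j|, fun k =>
    Finset.single_le_sum (f := fun j => |F j|) (fun _ _ => abs_nonneg _)
      (Finset.mem_range.2 (Nat.mod_lt k hm))⟩

lemma floor_sqrt_eq {K : ℕ} {s : ℝ} (h1 : (K : ℝ) ^ 2 - K ≤ s)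
    (h2 : s < (K : ℝ) ^ 2 + K) : ⌊√(s + 1 / 4) + 1 / 2⌋ = (K : ℤ) := by
  rw [Int.floor_eq_iff]
  constructor
  · have : (K : ℝ) - 1 / 2 ≤ √(s + 1 / 4) := le_sqrt_of_sq_le (by linarith)
    push_cast
    linarith
  · have : √(s + 1 / 4) < K + 1 / 2 := (sqrt_lt' (by positivity)).2 (by linarith)
    push_cast
    linarith

/-- Common form of the Neumann (`e = 1`) and Dirichlet (`e = -1`) cases. -/
lemma exists_average_error_bound (m : ℕ) (hm : 1 ≤ m) (e : ℝ) (he : |e| ≤ 1) (f : ℝ → ℝ)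
    (hf : ∀ s : ℝ, 0 ≤ s → f s =
      (⌊√(s + 1 / 4) + 1 / 2⌋ : ℝ) ^ 2 / (2 * m)
        + e * ((⌊√(s + 1 / 4) + 1 / 2⌋ : ℝ) / 2)
        + ((⌊√(s + 1 / 4) + 1 / 2⌋ % (m : ℤ) : ℤ) : ℝ)
          * ((m : ℝ) - ((⌊√(s + 1 / 4) + 1 / 2⌋ % (m : ℤ) : ℤ) : ℝ)) / (2 * m)
        - (s / (2 * m) + e * ((1 / 2) * √(s + 1 / 4))
          + (1 / 12) * ((m : ℝ) - 1 / m) + 1 / (6 * m))) :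
    ∃ C : ℝ, ∀ t : ℝ, 1 ≤ t →
      |(1 / t) * (∫ s in (0 : ℝ)..t, f s) - 1 / (m : ℝ) * luneProfile √(t + 1 / 4)|
        ≤ C * t ^ (-(1 / 2) : ℝ) := by
  have hm1 : (1 : ℝ) ≤ m := by exact_mod_cast hm
  obtain ⟨M₁, hM₁⟩ := exists_bound_comp_mod (fun j => lunePartialSum m j) m hm
  obtain ⟨M₂, hM₂⟩ := exists_bound_comp_mod
    (fun j => (j : ℝ) * (m - j) / (2 * m) - 1 / 12 * ((m : ℝ) - 1 / m)) m hm
  refine ⟨(3 + 7 * max M₁ M₂) * 2, fun t ht => ?_⟩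
  have hmain := abs_integral_sub_luneProfile_le (a := 1 / m) (e := e) (M := max M₁ M₂) (f := f)
    (u := fun k => ((k % m : ℕ) : ℝ) * (m - (k % m : ℕ)) / (2 * m) - 1 / 12 * ((m : ℝ) - 1 / m))
    (R := fun k => lunePartialSum m (k % m : ℕ)) (by positivity)
    ((div_le_one (by linarith)).2 hm1) he
    (lunePartialSum_mod_succ m hm) (fun k => (hM₁ k).trans (le_max_left _ _))
    (fun k => (hM₂ k).trans (le_max_right _ _)) (by
      intro K s h1 h2
      have hs : 0 ≤ s := by
        have : (K : ℝ) ≤ (K : ℝ) ^ 2 := by exact_mod_cast Nat.le_self_pow two_ne_zero K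
        linarith
      rw [hf s hs, floor_sqrt_eq h1 h2, ← Int.natCast_mod]
      simp only [Int.cast_natCast]
      field_simp
      ring) ht
  have ht0 : 0 < t := by linarith
  have hpow : t ^ (-(1 / 2) : ℝ) = √t / t := by
    rw [rpow_neg ht0.le, ← sqrt_eq_rpow, inv_eq_one_div, div_eq_div_iff (by positivity) ht0.ne',
      one_mul, mul_self_sqrt ht0.le]
  rw [hpow]
  calc _ = |(∫ s in (0 : ℝ)..t, f s) - t * (1 / (m : ℝ) * luneProfile √(t + 1 / 4))| / t := by
        rw [← abs_of_pos ht0, ← abs_div, abs_of_pos ht0]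
        congr 1
        field_simp
    _ ≤ (3 + 7 * max M₁ M₂) * (2 * √t) / t := by gcongr
    _ = _ := by ring

/-- Average error asymptotics for the lune `L_{2m}` with Neumann and Dirichlet boundary
conditions: there is a continuous periodic function `g` of mean value zero such that both
averages equal `g(√(t + 1/4)) + O(t^{-1/2})`. -/
theorem lune_average_error (m : ℕ) (hm : 1 ≤ m) (NN ND : ℝ → ℝ)
    (hNN : ∀ s : ℝ, 0 ≤ s → NN s =
      (⌊Real.sqrt (s + 1 / 4) + 1 / 2⌋ : ℝ) ^ 2 / (2 * m)
        + (⌊Real.sqrt (s + 1 / 4) + 1 / 2⌋ : ℝ) / 2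
        + ((⌊Real.sqrt (s + 1 / 4) + 1 / 2⌋ % (m : ℤ) : ℤ) : ℝ)
          * ((m : ℝ) - ((⌊Real.sqrt (s + 1 / 4) + 1 / 2⌋ % (m : ℤ) : ℤ) : ℝ)) / (2 * m))
    (hND : ∀ s : ℝ, 0 ≤ s → ND s =
      (⌊Real.sqrt (s + 1 / 4) + 1 / 2⌋ : ℝ) ^ 2 / (2 * m)
        - (⌊Real.sqrt (s + 1 / 4) + 1 / 2⌋ : ℝ) / 2
        + ((⌊Real.sqrt (s + 1 / 4) + 1 / 2⌋ % (m : ℤ) : ℤ) : ℝ)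
          * ((m : ℝ) - ((⌊Real.sqrt (s + 1 / 4) + 1 / 2⌋ % (m : ℤ) : ℤ) : ℝ)) / (2 * m)) :
    ∃ g : ℝ → ℝ, ∃ T > (0 : ℝ), Continuous g ∧ (∀ x : ℝ, g (x + T) = g x) ∧
      (∫ x in (0:ℝ)..T, g x) = 0 ∧
      ∃ C : ℝ, ∀ t : ℝ, 1 ≤ t →
        |(1 / t) * (∫ s in (0:ℝ)..t,
            (NN s - (s / (2 * m) + (1 / 2) * Real.sqrt (s + 1 / 4)
              + (1 / 12) * ((m : ℝ) - 1 / m) + 1 / (6 * m))))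
          - g (Real.sqrt (t + 1 / 4))| ≤ C * t ^ (-(1/2) : ℝ) ∧
        |(1 / t) * (∫ s in (0:ℝ)..t,
            (ND s - (s / (2 * m) - (1 / 2) * Real.sqrt (s + 1 / 4)
              + (1 / 12) * ((m : ℝ) - 1 / m) + 1 / (6 * m))))
          - g (Real.sqrt (t + 1 / 4))| ≤ C * t ^ (-(1/2) : ℝ) := by
  obtain ⟨C₁, h₁⟩ := exists_average_error_bound m hm 1 (by simp)
    (fun s => NN s - (s / (2 * m) + (1 / 2) * Real.sqrt (s + 1 / 4)
      + (1 / 12) * ((m : ℝ) - 1 / m) + 1 / (6 * m)))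
    (fun s hs => by simp only [hNN s hs]; ring)
  obtain ⟨C₂, h₂⟩ := exists_average_error_bound m hm (-1) (by simp)
    (fun s => ND s - (s / (2 * m) - (1 / 2) * Real.sqrt (s + 1 / 4)
      + (1 / 12) * ((m : ℝ) - 1 / m) + 1 / (6 * m)))
    (fun s hs => by simp only [hND s hs]; ring)
  refine ⟨fun x => 1 / (m : ℝ) * luneProfile x, 1, one_pos,
    continuous_const.mul continuous_luneProfile, fun x => by simp only [luneProfile_add_one], ?_,
    max C₁ C₂, fun t ht => ⟨(h₁ t ht).trans ?_, (h₂ t ht).trans ?_⟩⟩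
  · rw [intervalIntegral.integral_const_mul, integral_luneProfile, mul_zero]
  · gcongr
    exact le_max_left _ _
  · gcongr
    exact le_max_right _ _
end

section
/- Let m be an even positive integer. For s ≥ 0 let k(s) = ⌊√(s + 1/4) + 1/2⌋ and p(s) = k(s) mod m, and define N(s) = k(s)²/(4m) + k(s)/4 + p(s)(m − p(s))/(4m) if p(s) is even, and N(s) = k(s)²/(4m) + (1/4 + 1/(2m))k(s) + p(s)(m − p(s))/(4m) + (m − p(s))/(2m) if p(s) is odd. Define Ñ(t) = t/(4m) + (1/4 + 1/(4m))√(t + 1/4) + (1/24)(m − 1/m) + 1/8 + 1/(12m) and A(t) = (1/t)∫₀ᵗ (N(s) − Ñ(s)) ds. Then there exist a continuous periodic function g of mean value zero and a constant C such that |A(t) − g(√(t + 1/4))| ≤ C t^{−1/2} for all t ≥ 1. -/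
open Real

theorem intervalIntegrable_of_measurable_of_bounded {φ : ℝ → ℝ} {M : ℝ} (hφ : Measurable φ)
    (hM : ∀ x, |φ x| ≤ M) (a b : ℝ) : IntervalIntegrable φ MeasureTheory.volume a b := by
  rw [intervalIntegrable_iff]
  exact MeasureTheory.Measure.integrableOn_of_bounded (M := M) (by simp)
    hφ.aestronglyMeasurable (Filter.Eventually.of_forall hM)

/-- A continuous periodic function on the real line is bounded. -/
theorem exists_abs_le_of_continuous_of_periodic {φ : ℝ → ℝ} {T : ℝ} (hT : T ≠ 0)
    (hc : Continuous φ) (hp : Function.Periodic φ T) : ∃ M, ∀ x, |φ x| ≤ M := by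
  obtain ⟨M, hM⟩ := (hp.isBounded_of_continuous hT hc).exists_norm_le
  exact ⟨M, fun x => hM _ ⟨x, rfl⟩⟩

/-- A bounded measurable periodic function of mean value zero has a continuous periodic
primitive of mean value zero. -/
theorem exists_periodic_primitive {φ : ℝ → ℝ} {T M : ℝ} (hT : 0 < T) (hφ : Measurable φ)
    (hM : ∀ x, |φ x| ≤ M) (hp : Function.Periodic φ T) (h0 : ∫ x in (0 : ℝ)..T, φ x = 0) :
    ∃ Φ : ℝ → ℝ, Continuous Φ ∧ Function.Periodic Φ T ∧ (∫ x in (0 : ℝ)..T, Φ x) = 0 ∧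
      ∀ x, ContinuousAt φ x → HasDerivAt Φ (φ x) x := by
  have hi := intervalIntegrable_of_measurable_of_bounded hφ hM
  have hc : Continuous fun x => ∫ y in (0 : ℝ)..x, φ y :=
    intervalIntegral.continuous_primitive hi 0
  refine ⟨fun x => (∫ y in (0 : ℝ)..x, φ y) - (∫ z in (0 : ℝ)..T, ∫ y in (0 : ℝ)..z, φ y) / T,
    hc.sub continuous_const, fun x => ?_, ?_, fun x hx => ?_⟩
  · have h1 := intervalIntegral.integral_add_adjacent_intervals (hi 0 x) (hi x (x + T))
    have h2 := hp.intervalIntegral_add_eq x 0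
    rw [zero_add, h0] at h2
    simp only [← h1, h2, add_zero]
  · rw [intervalIntegral.integral_sub (hc.intervalIntegrable _ _) (by simp)]
    simp only [intervalIntegral.integral_const, sub_zero, smul_eq_mul]
    field_simp
    ring
  · exact (intervalIntegral.integral_hasDerivAt_right (hi 0 x)
      hφ.stronglyMeasurable.stronglyMeasurableAtFilter hx).sub_const _

/-- If `f s = x h(x) + b(x)` with `x = √(s + 1/4)` and `h`, `b` periodic of mean value zero, then
the averages of `f` are asymptotic to a continuous periodic function of `√(t + 1/4)`. -/
theorem exists_periodic_average {h b f : ℝ → ℝ} {T M : ℝ} {S : Set ℝ} (hT : 0 < T)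
    (hS : S.Countable) (hh : Measurable h) (hb : Measurable b)
    (hhM : ∀ x, |h x| ≤ M) (hbM : ∀ x, |b x| ≤ M)
    (hhp : Function.Periodic h T) (hbp : Function.Periodic b T)
    (hhc : ∀ x ∉ S, ContinuousAt h x) (hbc : ∀ x ∉ S, ContinuousAt b x)
    (hh0 : ∫ x in (0 : ℝ)..T, h x = 0) (hb0 : ∫ x in (0 : ℝ)..T, b x = 0)
    (hf : ∀ s, 0 ≤ s → f s = √(s + 1 / 4) * h √(s + 1 / 4) + b √(s + 1 / 4)) :
    ∃ g : ℝ → ℝ, Continuous g ∧ (∀ x : ℝ, g (x + T) = g x) ∧ (∫ x in (0:ℝ)..T, g x) = 0 ∧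
      ∃ C : ℝ, ∀ t : ℝ, 1 ≤ t →
        |(1 / t) * (∫ s in (0:ℝ)..t, f s) - g √(t + 1 / 4)| ≤ C * t ^ (-(1/2) : ℝ) := by
  obtain ⟨H, Hc, Hp, H0, Hd⟩ := exists_periodic_primitive hT hh hhM hhp hh0
  obtain ⟨B₁, hB₁⟩ := exists_abs_le_of_continuous_of_periodic hT.ne' Hc Hp
  obtain ⟨K, Kc, Kp, K0, Kd⟩ := exists_periodic_primitive (φ := fun x => b x - 2 * H x)
    (M := M + 2 * B₁) hT
    (hb.sub (Hc.measurable.const_mul 2))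
    (fun x => by
      have h1 := abs_le.1 (hB₁ x)
      have h2 := abs_le.1 (hbM x)
      rw [abs_le]; constructor <;> linarith)
    (fun x => by simp only [hbp x, Hp x])
    (by
      rw [intervalIntegral.integral_sub (intervalIntegrable_of_measurable_of_bounded hb hbM _ _)
        ((Hc.intervalIntegrable _ _).const_mul 2), intervalIntegral.integral_const_mul, hb0, H0]
      simp)
  obtain ⟨B₂, hB₂⟩ := exists_abs_le_of_continuous_of_periodic hT.ne' Kc Kp
  obtain ⟨L, Lc, Lp, L0, Ld⟩ := exists_periodic_primitive hT Kc.measurable hB₂ Kp K0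
  obtain ⟨B₃, hB₃⟩ := exists_abs_le_of_continuous_of_periodic hT.ne' Lc Lp
  let Φ : ℝ → ℝ := fun x => 2 * x ^ 2 * H x + 2 * x * K x - 2 * L x
  have Φc : Continuous Φ := by fun_prop
  have Φd : ∀ x ∉ S, HasDerivAt Φ (2 * x * (x * h x + b x)) x := by
    intro x hx
    have h1 := Hd x (hhc x hx)
    have h2 := Kd x ((hbc x hx).sub (Hc.continuousAt.const_mul 2))
    have h3 := Ld x Kc.continuousAt
    have h4 := (((((hasDerivAt_id x).pow 2).const_mul 2).mul h1).add
      (((hasDerivAt_id x).const_mul 2).mul h2)).sub (h3.const_mul 2)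
    refine h4.congr_deriv ?_
    simp
    ring
  have hsc : Continuous fun s : ℝ => √(s + 1 / 4) := by fun_prop
  have key : ∀ t : ℝ, 1 ≤ t → ∫ s in (0:ℝ)..t, f s = Φ √(t + 1 / 4) - Φ √(0 + 1 / 4) := by
    intro t ht
    refine MeasureTheory.integral_eq_of_hasDerivAt_off_countable (fun s => Φ √(s + 1 / 4)) f
      (s := (fun x => x ^ 2 - 1 / 4) '' S) (hS.image _) (Φc.comp hsc).continuousOn ?_ ?_
    · rintro s ⟨hs, hsS⟩
      rw [min_eq_left (by linarith)] at hs
      have hs0 : 0 < s := hs.1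
      have hx : 0 < √(s + 1 / 4) := Real.sqrt_pos.2 (by linarith)
      have hxS : √(s + 1 / 4) ∉ S := fun hmem =>
        hsS ⟨_, hmem, by simp only [Real.sq_sqrt (show 0 ≤ s + 1 / 4 by linarith)]; ring⟩
      have h1 := (Φd _ hxS).comp s
        (((hasDerivAt_id s).add_const (1 / 4)).sqrt (by simp; linarith))
      refine h1.congr_deriv ?_
      rw [hf s hs0.le]
      simp only [id]
      field_simp
    · have h1 := (intervalIntegrable_of_measurable_of_bounded (hh.comp hsc.measurable)
        (fun x => hhM _) 0 t).continuousOn_mul hsc.continuousOn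
      have h2 := intervalIntegrable_of_measurable_of_bounded (hb.comp hsc.measurable)
        (fun x => hbM _) 0 t
      refine (h1.add h2).congr fun s hs => ?_
      rw [Set.uIoc_of_le (by linarith)] at hs
      exact (hf s hs.1.le).symm
  refine ⟨fun x => 2 * H x, by fun_prop, fun x => by simp only [Hp x], by simp [H0],
    B₁ / 2 + 4 * B₂ + 2 * B₃ + |Φ √(0 + 1 / 4)|, fun t ht => ?_⟩
  rw [key t ht]
  have ht0 : 0 < t := by linarith
  set X := √(t + 1 / 4) with hX
  have hX2 : X ^ 2 = t + 1 / 4 := Real.sq_sqrt (by linarith)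
  have hX0 : 0 ≤ X := Real.sqrt_nonneg _
  have hr : √t ^ 2 = t := Real.sq_sqrt ht0.le
  have hr1 : 1 ≤ √t := Real.one_le_sqrt.2 ht
  have hXr : X ≤ 2 * √t := by
    rw [← abs_of_nonneg hX0, ← abs_of_nonneg (show 0 ≤ 2 * √t by linarith), ← sq_le_sq]
    nlinarith
  have hrp : t ^ (-(1/2) : ℝ) = √t / t := by
    rw [Real.rpow_neg ht0.le, ← Real.sqrt_eq_rpow]
    field_simp
    exact hr.symm
  have e : (1 / t) * (Φ X - Φ √(0 + 1 / 4)) - 2 * H X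
      = (H X / 2 + 2 * X * K X - 2 * L X - Φ √(0 + 1 / 4)) / t := by
    have : Φ X = 2 * (t + 1 / 4) * H X + 2 * X * K X - 2 * L X := by rw [← hX2]
    rw [this]
    field_simp
    ring
  rw [e, abs_div, abs_of_pos ht0, hrp, ← mul_div_assoc]
  gcongr
  have b1 : |H X / 2| ≤ B₁ / 2 := by rw [abs_div, abs_two]; linarith [hB₁ X]
  have b2 : |2 * X * K X| ≤ 4 * B₂ * √t := by
    rw [abs_mul, abs_of_nonneg (show 0 ≤ 2 * X by linarith)]
    calc 2 * X * |K X| ≤ (2 * (2 * √t)) * B₂ := by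
          gcongr
          exact hB₂ X
      _ = _ := by ring
  have b3 : |2 * L X| ≤ 2 * B₃ := by rw [abs_mul, abs_two]; linarith [hB₃ X]
  have n1 : 0 ≤ B₁ := (abs_nonneg _).trans (hB₁ 0)
  have n3 : 0 ≤ B₃ := (abs_nonneg _).trans (hB₃ 0)
  have n4 := abs_nonneg (Φ √(0 + 1 / 4))
  calc |H X / 2 + 2 * X * K X - 2 * L X - Φ √(0 + 1 / 4)|
      ≤ |H X / 2| + |2 * X * K X| + |2 * L X| + |Φ √(0 + 1 / 4)| := by
        refine (abs_sub _ _).trans ?_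
        gcongr
        refine (abs_sub _ _).trans ?_
        gcongr
        exact abs_add_le _ _
    _ ≤ B₁ / 2 + 4 * B₂ * √t + 2 * B₃ + |Φ √(0 + 1 / 4)| := by gcongr
    _ ≤ _ := by
        have hD : 0 ≤ B₁ / 2 + 2 * B₃ + |Φ √(0 + 1 / 4)| := by linarith
        linarith [mul_nonneg hD (sub_nonneg.2 hr1)]

/-- The function equal to `a k + c k * u + d * u ^ 2` at `x = k + u` with `k` an integer and
`-1/2 ≤ u < 1/2`. -/
noncomputable def stairQuadratic (a c : ℤ → ℝ) (d : ℝ) (x : ℝ) : ℝ :=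
  a ⌊x + 1 / 2⌋ + c ⌊x + 1 / 2⌋ * (x - ⌊x + 1 / 2⌋) + d * (x - ⌊x + 1 / 2⌋) ^ 2

section stairQuadratic

variable {a c : ℤ → ℝ} {d : ℝ} {m : ℕ}

theorem stairQuadratic_of_mem {k : ℤ} {x : ℝ} (h1 : k - 1 / 2 ≤ x) (h2 : x < k + 1 / 2) :
    stairQuadratic a c d x = a k + c k * (x - k) + d * (x - k) ^ 2 := by
  have : ⌊x + 1 / 2⌋ = k := Int.floor_eq_iff.2 ⟨by linarith, by linarith⟩
  rw [stairQuadratic, this]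

theorem measurable_stairQuadratic : Measurable (stairQuadratic a c d) := by
  have hf : Measurable fun x : ℝ => ⌊x + 1 / 2⌋ := Int.measurable_floor.comp (by fun_prop)
  have h : ∀ q : ℤ → ℝ, Measurable fun x : ℝ => q ⌊x + 1 / 2⌋ := fun q =>
    measurable_from_top.comp hf
  have hu : Measurable fun x : ℝ => x - ⌊x + 1 / 2⌋ := measurable_id.sub (h fun k => k)
  exact ((h a).add ((h c).mul hu)).add ((hu.pow_const 2).const_mul d)

theorem periodic_stairQuadratic (ha : Function.Periodic a m) (hc : Function.Periodic c m) :
    Function.Periodic (stairQuadratic a c d) m := by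
  intro x
  have h : ⌊x + m + 1 / 2⌋ = ⌊x + 1 / 2⌋ + m := by
    rw [show x + m + 1 / 2 = x + 1 / 2 + m by ring, Int.floor_add_natCast]
  simp only [stairQuadratic, h, ha _, hc _]
  push_cast
  ring

theorem exists_abs_le_of_int_periodic {a : ℤ → ℝ} (hm : 0 < m) (ha : Function.Periodic a m) :
    ∃ M, ∀ k, |a k| ≤ M := by
  refine ⟨∑ i ∈ Finset.range m, |a i|, fun k => ?_⟩
  have hm' : (0 : ℤ) < m := by exact_mod_cast hm
  have h0 := Int.emod_nonneg k hm'.ne'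
  have h1 := Int.emod_lt_of_pos k hm'
  have h2 : a k = a ((k % m).toNat : ℤ) := by
    rw [Int.toNat_of_nonneg h0, Int.emod_def, mul_comm]
    exact (ha.sub_int_mul_eq (k / m)).symm
  rw [h2]
  exact Finset.single_le_sum (f := fun i : ℕ => |a i|) (fun _ _ => abs_nonneg _)
    (Finset.mem_range.2 (by omega))

theorem exists_abs_stairQuadratic_le (hm : 0 < m) (ha : Function.Periodic a m)
    (hc : Function.Periodic c m) : ∃ M, ∀ x, |stairQuadratic a c d x| ≤ M := by
  obtain ⟨A, hA⟩ := exists_abs_le_of_int_periodic hm ha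
  obtain ⟨C, hC⟩ := exists_abs_le_of_int_periodic hm hc
  refine ⟨A + C * 1 + |d| * 1 ^ 2, fun x => ?_⟩
  have hu : |x - ⌊x + 1 / 2⌋| ≤ 1 := by
    have h1 := Int.floor_le (x + 1 / 2)
    have h2 := Int.lt_floor_add_one (x + 1 / 2)
    rw [abs_le]
    constructor <;> linarith
  have hC0 : 0 ≤ C := (abs_nonneg _).trans (hC 0)
  refine (abs_add_three _ _ _).trans ?_
  rw [abs_mul, abs_mul, abs_pow]
  gcongr
  · exact hA _
  · exact hC _

theorem continuousAt_stairQuadratic {x : ℝ} (hx : x ∉ Set.range fun n : ℤ => (n : ℝ) - 1 / 2) :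
    ContinuousAt (stairQuadratic a c d) x := by
  have h1 : (⌊x + 1 / 2⌋ : ℝ) - 1 / 2 < x :=
    lt_of_le_of_ne (by linarith [Int.floor_le (x + 1 / 2)]) fun h => hx ⟨_, h⟩
  have h2 : x < ⌊x + 1 / 2⌋ + 1 / 2 := by linarith [Int.lt_floor_add_one (x + 1 / 2)]
  have hc : ContinuousAt (fun y : ℝ => a ⌊x + 1 / 2⌋ + c ⌊x + 1 / 2⌋ * (y - ⌊x + 1 / 2⌋)
      + d * (y - ⌊x + 1 / 2⌋) ^ 2) x := by fun_prop
  refine hc.congr ?_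
  filter_upwards [Ioo_mem_nhds h1 h2] with y hy
  exact (stairQuadratic_of_mem hy.1.le hy.2).symm

theorem integral_stairQuadratic_step (hm : 0 < m) (ha : Function.Periodic a m)
    (hc : Function.Periodic c m) (k : ℤ) :
    ∫ x in (k - 1 / 2 : ℝ)..(k + 1 / 2), stairQuadratic a c d x = a k + d / 12 := by
  obtain ⟨M, hM⟩ := exists_abs_stairQuadratic_le (d := d) hm ha hc
  rw [MeasureTheory.integral_eq_of_hasDerivAt_off_countable
    (fun x : ℝ => a k * (x - k) + c k / 2 * (x - k) ^ 2 + d / 3 * (x - k) ^ 3) _ (s := ∅)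
    Set.countable_empty (by fun_prop) ?_
    (intervalIntegrable_of_measurable_of_bounded measurable_stairQuadratic hM _ _)]
  · ring
  · rintro x ⟨hx, -⟩
    rw [min_eq_left (by linarith), max_eq_right (by linarith)] at hx
    rw [stairQuadratic_of_mem hx.1.le hx.2]
    have h := (hasDerivAt_id x).sub_const (k : ℝ)
    refine (((h.const_mul (a k)).add ((h.pow 2).const_mul (c k / 2))).add
      ((h.pow 3).const_mul (d / 3))).congr_deriv ?_
    simp
    ring

theorem integral_stairQuadratic (hm : 0 < m) (ha : Function.Periodic a m)
    (hc : Function.Periodic c m) :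
    ∫ x in (0 : ℝ)..m, stairQuadratic a c d x = ∑ k ∈ Finset.range m, (a k + d / 12) := by
  obtain ⟨M, hM⟩ := exists_abs_stairQuadratic_le (d := d) hm ha hc
  have h1 := (periodic_stairQuadratic (d := d) ha hc).intervalIntegral_add_eq 0 (-(1 / 2))
  rw [zero_add] at h1
  have h2 := intervalIntegral.sum_integral_adjacent_intervals (n := m)
    (f := stairQuadratic a c d) (a := fun k : ℕ => (k : ℝ) - 1 / 2)
    (μ := MeasureTheory.volume) fun k _ =>
      intervalIntegrable_of_measurable_of_bounded measurable_stairQuadratic hM _ _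
  rw [h1, show -(1 / 2) + (m : ℝ) = m - 1 / 2 by ring,
    show -(1 / 2) = ((0 : ℕ) : ℝ) - 1 / 2 by norm_num, ← h2]
  refine Finset.sum_congr rfl fun k _ => ?_
  rw [← integral_stairQuadratic_step hm ha hc k]
  push_cast
  congr 1
  ring

end stairQuadratic

theorem sum_range_even_parity (n : ℕ) (A : ℝ) :
    ∑ k ∈ Finset.range (2 * n), (if Even (k : ℤ) then -A else A) = 0 := by
  induction n with
  | zero => simp
  | succ j ih =>
    rw [show 2 * (j + 1) = 2 * j + 1 + 1 by ring, Finset.sum_range_succ, Finset.sum_range_succ, ih]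
    have h1 : Even ((2 * j : ℕ) : ℤ) := by simp
    have h2 : ¬ Even ((2 * j + 1 : ℕ) : ℤ) := by push_cast; simp [parity_simps]
    rw [if_pos h1, if_neg h2]
    ring

theorem sum_range_even_corner (n : ℕ) (μ E : ℝ) :
    ∑ k ∈ Finset.range (2 * n), ((k : ℝ) * (μ - k) / (4 * μ) + E
        + if Even (k : ℤ) then 0 else (μ - k) / (2 * μ))
      = (μ * (n * (2 * n - 1)) - (2 * n - 1) * n * (4 * n - 1) / 3) / (4 * μ) + 2 * n * E
        + (n * μ - n ^ 2) / (2 * μ) := by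
  induction n with
  | zero => simp
  | succ j ih =>
    rw [show 2 * (j + 1) = 2 * j + 1 + 1 by ring, Finset.sum_range_succ, Finset.sum_range_succ, ih]
    have h1 : Even ((2 * j : ℕ) : ℤ) := by simp
    have h2 : ¬ Even ((2 * j + 1 : ℕ) : ℤ) := by push_cast; simp [parity_simps]
    rw [if_pos h1, if_neg h2]
    push_cast
    ring

/-- Average error asymptotics for the half-lune `L_{2m}^{1/2}` (with `m` even) with
Neumann boundary conditions on all edges: there is a continuous periodic function `g` of
mean value zero such that the average error is `g(√(t + 1/4)) + O(t^{-1/2})`. -/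
theorem half_lune_average_error (m : ℕ) (hmeven : Even m) (hm : 0 < m) (N : ℝ → ℝ)
    (hN : ∀ s : ℝ, 0 ≤ s → N s =
      if Even (⌊Real.sqrt (s + 1 / 4) + 1 / 2⌋ % (m : ℤ)) then
        (⌊Real.sqrt (s + 1 / 4) + 1 / 2⌋ : ℝ) ^ 2 / (4 * m)
          + (⌊Real.sqrt (s + 1 / 4) + 1 / 2⌋ : ℝ) / 4
          + ((⌊Real.sqrt (s + 1 / 4) + 1 / 2⌋ % (m : ℤ) : ℤ) : ℝ)
            * ((m : ℝ) - ((⌊Real.sqrt (s + 1 / 4) + 1 / 2⌋ % (m : ℤ) : ℤ) : ℝ)) / (4 * m)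
      else
        (⌊Real.sqrt (s + 1 / 4) + 1 / 2⌋ : ℝ) ^ 2 / (4 * m)
          + (1 / 4 + 1 / (2 * m)) * (⌊Real.sqrt (s + 1 / 4) + 1 / 2⌋ : ℝ)
          + ((⌊Real.sqrt (s + 1 / 4) + 1 / 2⌋ % (m : ℤ) : ℤ) : ℝ)
            * ((m : ℝ) - ((⌊Real.sqrt (s + 1 / 4) + 1 / 2⌋ % (m : ℤ) : ℤ) : ℝ)) / (4 * m)
          + ((m : ℝ) - ((⌊Real.sqrt (s + 1 / 4) + 1 / 2⌋ % (m : ℤ) : ℤ) : ℝ)) / (2 * m)) :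
    ∃ g : ℝ → ℝ, ∃ T > (0 : ℝ), Continuous g ∧ (∀ x : ℝ, g (x + T) = g x) ∧
      (∫ x in (0:ℝ)..T, g x) = 0 ∧
      ∃ C : ℝ, ∀ t : ℝ, 1 ≤ t →
        |(1 / t) * (∫ s in (0:ℝ)..t,
            (N s - (s / (4 * m) + (1 / 4 + 1 / (4 * m)) * Real.sqrt (s + 1 / 4)
              + (1 / 24) * ((m : ℝ) - 1 / m) + 1 / 8 + 1 / (12 * m))))
          - g (Real.sqrt (t + 1 / 4))| ≤ C * t ^ (-(1/2) : ℝ) := by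
  have hm0 : (m : ℝ) ≠ 0 := by exact_mod_cast hm.ne'
  have hmT : (0 : ℝ) < m := by exact_mod_cast hm
  let a₁ : ℤ → ℝ := fun k => if Even (k % (m : ℤ)) then -(1 / (4 * m)) else 1 / (4 * m)
  let c₁ : ℤ → ℝ := fun _ => -(1 / (2 * m))
  let a₂ : ℤ → ℝ := fun k =>
    ((k % (m : ℤ) : ℤ) : ℝ) * ((m : ℝ) - ((k % (m : ℤ) : ℤ) : ℝ)) / (4 * m)
      + (1 / (16 * m) - (1 / 24 * ((m : ℝ) - 1 / m) + 1 / 8 + 1 / (12 * m)))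
      + if Even (k % (m : ℤ)) then 0 else ((m : ℝ) - ((k % (m : ℤ) : ℤ) : ℝ)) / (2 * m)
  let c₂ : ℤ → ℝ := fun k => -(1 / 4) + if Even (k % (m : ℤ)) then (0 : ℝ) else -(1 / (2 * m))
  have hmod : ∀ k : ℤ, (k + m) % (m : ℤ) = k % m := fun k => by simp
  have ha₁ : Function.Periodic a₁ m := fun k => by simp only [a₁, hmod]
  have hc₁ : Function.Periodic c₁ m := fun k => rfl
  have ha₂ : Function.Periodic a₂ m := fun k => by simp only [a₂, hmod]
  have hc₂ : Function.Periodic c₂ m := fun k => by simp only [c₂, hmod]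
  have hlt : ∀ k ∈ Finset.range m, ((k : ℤ) % (m : ℤ)) = k := fun k hk =>
    Int.emod_eq_of_lt (by positivity) (by exact_mod_cast Finset.mem_range.1 hk)
  obtain ⟨n, hn⟩ := hmeven.exists_two_nsmul
  rw [smul_eq_mul] at hn
  have hnR : (m : ℝ) = 2 * n := by exact_mod_cast hn
  obtain ⟨M₁, hM₁⟩ := exists_abs_stairQuadratic_le (d := 0) hm ha₁ hc₁
  obtain ⟨M₂, hM₂⟩ := exists_abs_stairQuadratic_le (d := 1 / (4 * m)) hm ha₂ hc₂
  obtain ⟨g, hg⟩ := exists_periodic_average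
    (h := stairQuadratic a₁ c₁ 0) (b := stairQuadratic a₂ c₂ (1 / (4 * m)))
    (f := fun s => N s - (s / (4 * m) + (1 / 4 + 1 / (4 * m)) * Real.sqrt (s + 1 / 4)
      + (1 / 24) * ((m : ℝ) - 1 / m) + 1 / 8 + 1 / (12 * m)))
    (T := m) (M := max M₁ M₂) hmT (Set.countable_range fun n : ℤ => (n : ℝ) - 1 / 2)
    measurable_stairQuadratic measurable_stairQuadratic
    (fun x => (hM₁ x).trans (le_max_left _ _)) (fun x => (hM₂ x).trans (le_max_right _ _))
    (periodic_stairQuadratic ha₁ hc₁) (periodic_stairQuadratic ha₂ hc₂)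
    (fun _ => continuousAt_stairQuadratic) (fun _ => continuousAt_stairQuadratic)
    (by
      have h := sum_range_even_parity n (1 / (4 * m))
      rw [← hn] at h
      rw [integral_stairQuadratic hm ha₁ hc₁]
      refine Eq.trans (Finset.sum_congr rfl fun k hk => ?_) h
      simp only [a₁, hlt k hk, zero_div, add_zero])
    (by
      rw [integral_stairQuadratic hm ha₂ hc₂, Finset.sum_add_distrib]
      have h := sum_range_even_corner n m
        (1 / (16 * m) - (1 / 24 * ((m : ℝ) - 1 / m) + 1 / 8 + 1 / (12 * m)))
      rw [← hn] at h
      have h' : ∑ k ∈ Finset.range m, a₂ k = _ := Eq.trans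
        (Finset.sum_congr rfl fun k hk => by simp only [a₂, hlt k hk, Int.cast_natCast]) h
      have hn0 : (n : ℝ) ≠ 0 := fun h0 => hm0 (by rw [hnR, h0, mul_zero])
      rw [h', Finset.sum_const, Finset.card_range, nsmul_eq_mul, hnR]
      field_simp
      ring)
    (by
      intro s hs
      have hx : √(s + 1 / 4) ^ 2 = s + 1 / 4 := Real.sq_sqrt (by linarith)
      have hs' : s = √(s + 1 / 4) ^ 2 - 1 / 4 := by rw [hx]; ring
      simp only [hN s hs, stairQuadratic, a₁, a₂, c₁, c₂]
      generalize √(s + 1 / 4) = x at *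
      subst hs'
      generalize ⌊x + 1 / 2⌋ = k
      split_ifs <;> field_simp <;> ring)
  exact ⟨g, m, hmT, hg⟩
end
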